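/- Let n ≥ 2 and 𝐚 = (a₁,a₂) ∈ [1,∞)², and set ω_𝐚(y) = (1−|y|^{a₁})^{1/a₂} and ω̃_𝐚(z) = (1−|z|^{a₂})^{1/a₁}. There are constants c, C > 0 depending only on n and 𝐚 such that for all nonnegative measurable f, g on ℝⁿ, all x ∈ ℝⁿ and all t₁, t₂ > 0: c · J ≤ 𝒜^𝐚_{(t₁,t₂)}(f,g)(x) ≤ C · J, where J = ∫_{|y|<1} f(x−t₁y) 𝔄g(x, t₂ ω_𝐚(y)) ω_𝐚(y)^{n−a₂} dy; and likewise c · J̃ ≤ 𝒜^𝐚_{(t₁,t₂)}(f,g)(x) ≤ C · J̃ with J̃ = ∫_{|z|<1} g(x−t₂z) 𝔄f(x, t₁ ω̃_𝐚(z)) ω̃_𝐚(z)^{n−a₁} dz. -/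

import Mathlib

open MeasureTheory Metric Set
open scoped ENNReal NNReal

noncomputable section

abbrev Rn (n : ℕ) : Type := EuclideanSpace ℝ (Fin n)

/-- The degenerate surface `S₂^𝐚 = {(y,z) : |y|^{a₁} + |z|^{a₂} = 1} ⊆ ℝⁿ × ℝⁿ`. -/
def S2 (n : ℕ) (a₁ a₂ : ℝ) : Set (Rn n × Rn n) := {p | ‖p.1‖ ^ a₁ + ‖p.2‖ ^ a₂ = 1}

/-- The normalized surface measure on `S₂^𝐚`, realized as the normalized
`(2n-1)`-dimensional Hausdorff measure restricted to the surface. -/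
def μS2 (n : ℕ) (a₁ a₂ : ℝ) : Measure (Rn n × Rn n) :=
  (μH[(2 * (n : ℝ) - 1)] (S2 n a₁ a₂))⁻¹ • (μH[(2 * (n : ℝ) - 1)]).restrict (S2 n a₁ a₂)

/-- The bilinear average `𝒜^𝐚_{(t₁,t₂)}(f,g)(x)` of nonnegative functions,
as an `ℝ≥0∞`-valued integral. -/
def biAvgE (n : ℕ) (a₁ a₂ : ℝ) (f g : Rn n → ℝ) (t₁ t₂ : ℝ) (x : Rn n) : ℝ≥0∞ :=
  ∫⁻ p, ENNReal.ofReal (f (x - t₁ • p.1)) * ENNReal.ofReal (g (x - t₂ • p.2)) ∂(μS2 n a₁ a₂)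

/-- Surface measure on the unit sphere `𝕊^{n-1} ⊆ ℝⁿ`: the `(n-1)`-dimensional
Hausdorff measure restricted to the sphere. -/
def μSph (n : ℕ) : Measure (Rn n) :=
  (μH[((n : ℝ) - 1)]).restrict (sphere (0 : Rn n) 1)

/-- The spherical average `𝔄g(x,t) = ∫_{𝕊^{n-1}} g(x - tθ) dσ(θ)` for nonnegative `g`. -/
def sphAvgE (n : ℕ) (g : Rn n → ℝ) (x : Rn n) (t : ℝ) : ℝ≥0∞ :=
  ∫⁻ θ, ENNReal.ofReal (g (x - t • θ)) ∂(μSph n)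

/-- The weight `ω_𝐚(y) = (1 - |y|^{a₁})^{1/a₂}`. -/
def omegaW (a₁ a₂ : ℝ) {n : ℕ} (y : Rn n) : ℝ := (1 - ‖y‖ ^ a₁) ^ (1 / a₂)

/-- The sliced integral
`J = ∫_{|y|<1} f(x - t₁y) 𝔄g(x, t₂ ω_𝐚(y)) ω_𝐚(y)^{n - a₂} dy`. -/
def Jslice (n : ℕ) (a₁ a₂ : ℝ) (f g : Rn n → ℝ) (t₁ t₂ : ℝ) (x : Rn n) : ℝ≥0∞ :=
  ∫⁻ y in ball (0 : Rn n) 1,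
    ENNReal.ofReal (f (x - t₁ • y)) * sphAvgE n g x (t₂ * omegaW a₁ a₂ y) *
      ENNReal.ofReal ((omegaW a₁ a₂ y) ^ ((n : ℝ) - a₂))


/-- Eilenberg-type inequality for a product with an interval. -/
lemma hausdorff_le_prod_interval {X : Type*} [MetricSpace X] [MeasurableSpace X] [BorelSpace X]
    [SecondCountableTopology X]
    (s : ℝ) (hs : 0 ≤ s) (A : Set X) :
    (μH[s] : Measure X) A ≤ (μH[s + 1] : Measure (X × ℝ)) (A ×ˢ Icc (1:ℝ) 2) := by
  rw [Measure.hausdorffMeasure_apply s A, Measure.hausdorffMeasure_apply (s + 1)]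
  refine iSup₂_le fun r hr => le_iSup₂_of_le r hr ?_
  refine le_iInf fun t => le_iInf fun hcov => le_iInf fun hd => ?_
  set I : ℝ≥0∞ := ⨅ (t : ℕ → Set X) (_ : A ⊆ ⋃ n, t n) (_ : ∀ n, ediam (t n) ≤ r),
          ∑' n, ⨆ _ : (t n).Nonempty, ediam (t n) ^ s with hI
  let T : ℕ → Set ℝ := fun n => closure (Prod.snd '' t n)
  have hdT : ∀ n, volume (T n) ≤ ediam (t n) := fun n => by
    refine (Real.volume_le_diam _).trans ?_
    rw [ediam_closure]
    simpa using (LipschitzWith.prod_snd (α := X) (β := ℝ)).ediam_image_le (t n)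
  have key : ∀ x ∈ Icc (1:ℝ) 2, I ≤ ∑' n, (T n).indicator (fun _ => ediam (t n) ^ s) x := by
    intro x hx
    have q1 : A ⊆ ⋃ n, {y | (y, x) ∈ t n} := by
      intro y hy
      have := hcov (show (y, x) ∈ A ×ˢ Icc (1:ℝ) 2 from ⟨hy, hx⟩)
      simpa using this
    have q2 : ∀ n, ediam {y | (y, x) ∈ t n} ≤ r := by
      intro n
      refine le_trans ?_ (hd n)
      refine ediam_le fun y hy y' hy' => ?_
      refine le_trans ?_ (edist_le_ediam_of_mem (s := t n) hy hy')
      simp [Prod.edist_eq]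
    · have q3 : I ≤ ∑' n, ⨆ _ : {y | (y, x) ∈ t n}.Nonempty, ediam {y | (y, x) ∈ t n} ^ s :=
        iInf_le_of_le (fun n => {y | (y, x) ∈ t n}) (iInf_le_of_le q1 (iInf_le_of_le q2 le_rfl))
      refine q3.trans ?_
      refine ENNReal.tsum_le_tsum fun n => ?_
      refine iSup_le fun ⟨y, hy⟩ => ?_
      have hm : x ∈ T n := subset_closure ⟨(y, x), hy, rfl⟩
      rw [indicator_of_mem hm]
      refine ENNReal.rpow_le_rpow ?_ hs
      refine ediam_le fun y hy y' hy' => ?_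
      refine le_trans ?_ (edist_le_ediam_of_mem (s := t n) hy hy')
      simp [Prod.edist_eq]
  calc I = ∫⁻ x in Icc (1:ℝ) 2, I := by simp; norm_num
    _ ≤ ∫⁻ x in Icc (1:ℝ) 2, ∑' n, (T n).indicator (fun _ => ediam (t n) ^ s) x :=
        setLIntegral_mono' measurableSet_Icc key
    _ ≤ ∫⁻ x, ∑' n, (T n).indicator (fun _ => ediam (t n) ^ s) x := setLIntegral_le_lintegral _ _
    _ = ∑' n, ∫⁻ x, (T n).indicator (fun _ => ediam (t n) ^ s) x := by
        refine lintegral_tsum fun n => ?_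
        exact (measurable_const.indicator isClosed_closure.measurableSet).aemeasurable
    _ ≤ _ := by
        refine ENNReal.tsum_le_tsum fun n => ?_
        rw [lintegral_indicator_const isClosed_closure.measurableSet]
        rcases (t n).eq_empty_or_nonempty with h | h
        · simp [h]
        · simp only [h, iSup_pos]
          rw [ENNReal.rpow_add_of_nonneg _ _ hs zero_le_one, ENNReal.rpow_one]
          gcongr
          exact hdT n

/-- Comparison of the Hausdorff measure on a level set and the cone measure. -/
lemma cone_compare {E : Type*} [NormedAddCommGroup E] [NormedSpace ℝ E] [FiniteDimensional ℝ E]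
    [MeasurableSpace E] [BorelSpace E] (μ : Measure E) [μ.IsAddHaarMeasure]
    (d : ℝ) (hd : d + 1 = Module.finrank ℝ E) (hd1 : 0 < d)
    (N : E → ℝ) (P : E → E) (hN : Measurable N) (hP : Measurable P) (S : Set E)
    (hS : MeasurableSet S) (K : ℝ≥0)
    (hPS : ∀ p, N p ∈ Icc (1:ℝ) 2 → P p ∈ S)
    (hsurj : ∀ x ∈ S, ∀ t ∈ Icc (1:ℝ) 2, ∃ p, N p = t ∧ P p = x)
    (hlip : ∀ p q, N p ∈ Icc (1:ℝ) 2 → N q ∈ Icc (1:ℝ) 2 → dist (P p) (P q) ≤ K * dist p q)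
    (hlipN : ∀ p q, N p ∈ Icc (1:ℝ) 2 → N q ∈ Icc (1:ℝ) 2 → dist (N p) (N q) ≤ K * dist p q)
    (hanti : ∀ p q, N p ∈ Icc (1:ℝ) 2 → N q ∈ Icc (1:ℝ) 2 →
      dist p q ≤ K * max (dist (P p) (P q)) (dist (N p) (N q))) :
    ∃ C : ℝ≥0,
      Measure.map P (μ.restrict (N ⁻¹' Icc 1 2)) ≤ (C : ℝ≥0∞) • (μH[d]).restrict S ∧
      (μH[d]).restrict S ≤ (C : ℝ≥0∞) • Measure.map P (μ.restrict (N ⁻¹' Icc 1 2)) := by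
  have hR : MeasurableSet (N ⁻¹' Icc 1 2) := hN measurableSet_Icc
  set κ := Measure.map P (μ.restrict (N ⁻¹' Icc 1 2)) with hκ
  have hκapp : ∀ s, MeasurableSet s → κ s = μ (P ⁻¹' s ∩ N ⁻¹' Icc 1 2) := fun s hs => by
    rw [hκ, Measure.map_apply hP hs, Measure.restrict_apply (hP hs)]
  -- first inequality
  have h1 : ∃ C : ℝ≥0, κ ≤ (C : ℝ≥0∞) • (μH[d]).restrict S := by
    set b : ℝ≥0 := (μ (ball 0 1)).toNNReal with hb
    have hb' : (b : ℝ≥0∞) = μ (ball 0 1) := ENNReal.coe_toNNReal measure_ball_lt_top.ne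
    -- bound for pieces
    have piece : ∀ s : Set E, MeasurableSet s → ∀ m : ℕ, 0 < m →
        ediam s ≤ ENNReal.ofReal (1 / m) →
        κ s ≤ ENNReal.ofReal (K ^ (Module.finrank ℝ E) * b * (1 / m) ^ d) := by
      intro s hs m hm hds
      have hm' : (0:ℝ) < m := by exact_mod_cast hm
      rw [hκapp s hs]
      have hsub : P ⁻¹' s ∩ N ⁻¹' Icc 1 2 ⊆ ⋃ j ∈ Finset.range m,
          (P ⁻¹' s ∩ N ⁻¹' Icc 1 2 ∩ N ⁻¹' Icc (1 + j / m) (1 + (j + 1) / m)) := by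
        rintro p ⟨hp, hpN⟩
        simp only [mem_iUnion, Finset.mem_range]
        have hpN' : 1 ≤ N p ∧ N p ≤ 2 := hpN
        by_cases h2 : N p = 2
        · refine ⟨m - 1, by omega, ⟨hp, hpN⟩, ?_⟩
          have : ((m - 1 : ℕ) : ℝ) = m - 1 := by
            rw [Nat.cast_sub (by omega)]; simp
          simp only [mem_preimage, mem_Icc, this, h2]
          constructor
          · have : ((m:ℝ) - 1) / m ≤ 1 := by rw [div_le_one hm']; linarith
            linarith
          · have : ((m:ℝ) - 1 + 1) / m = 1 := by field_simp; ring
            linarith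
        · have hlt : N p < 2 := lt_of_le_of_ne hpN'.2 h2
          have h0 : 0 ≤ (N p - 1) * m := mul_nonneg (by linarith [hpN'.1]) hm'.le
          refine ⟨⌊(N p - 1) * m⌋₊, ?_, ⟨hp, hpN⟩, ?_⟩
          · rw [Nat.floor_lt h0]
            nlinarith
          · have e1 := Nat.floor_le h0
            have e2 := Nat.lt_floor_add_one ((N p - 1) * m)
            simp only [mem_preimage, mem_Icc]
            constructor
            · have : (⌊(N p - 1) * m⌋₊ : ℝ) / m ≤ N p - 1 := by rw [div_le_iff₀ hm']; exact e1
              linarith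
            · have : N p - 1 ≤ ((⌊(N p - 1) * m⌋₊ : ℝ) + 1) / m := by
                rw [le_div_iff₀ hm']; exact e2.le
              linarith
      have hpc : ∀ j : ℕ, μ (P ⁻¹' s ∩ N ⁻¹' Icc 1 2 ∩ N ⁻¹' Icc (1 + j / m) (1 + (j + 1) / m))
          ≤ ENNReal.ofReal ((K * (1 / m)) ^ Module.finrank ℝ E * b) := by
        intro j
        rcases (P ⁻¹' s ∩ N ⁻¹' Icc 1 2 ∩ N ⁻¹' Icc (1 + (j:ℝ) / m) (1 + (j + 1) / m)).eq_empty_or_nonempty with h | ⟨q, ⟨hq1, hq2⟩, hq3⟩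
        · rw [h]; simp
        · have hsb : P ⁻¹' s ∩ N ⁻¹' Icc 1 2 ∩ N ⁻¹' Icc (1 + (j:ℝ) / m) (1 + (j + 1) / m)
              ⊆ closedBall q (K * (1 / m)) := by
            rintro p ⟨⟨hp1, hp2⟩, hp3⟩
            rw [mem_closedBall]
            refine (hanti p q hp2 hq2).trans ?_
            gcongr
            refine max_le ?_ ?_
            · have := (edist_le_ediam_of_mem (s := s) hp1 hq1).trans hds
              rw [edist_dist] at this
              exact (ENNReal.ofReal_le_ofReal_iff (by positivity)).1 this
            · rw [Real.dist_eq]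
              have e : (j + 1 : ℝ) / m = j / m + 1 / m := by ring
              simp only [mem_preimage, mem_Icc, e] at hp3 hq3
              rw [abs_le]; constructor <;> linarith
          refine (measure_mono hsb).trans ?_
          rw [Measure.addHaar_closedBall _ _ (by positivity), ENNReal.ofReal_mul (by positivity),
            ← hb']
          simp
      calc μ (P ⁻¹' s ∩ N ⁻¹' Icc 1 2) ≤ _ := measure_mono hsub
        _ ≤ ∑ j ∈ Finset.range m, μ (P ⁻¹' s ∩ N ⁻¹' Icc 1 2 ∩ N ⁻¹' Icc (1 + (j:ℝ) / m) (1 + (j + 1) / m)) := measure_biUnion_finset_le _ _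
        _ ≤ ∑ j ∈ Finset.range m, ENNReal.ofReal ((K * (1 / m)) ^ Module.finrank ℝ E * b) :=
            Finset.sum_le_sum fun j _ => hpc j
        _ = ENNReal.ofReal (m * ((K * (1 / m)) ^ Module.finrank ℝ E * b)) := by
            rw [Finset.sum_const, Finset.card_range, nsmul_eq_mul,
              ENNReal.ofReal_mul (p := (m:ℝ)) (by positivity), ENNReal.ofReal_natCast]
        _ ≤ _ := by
            apply ENNReal.ofReal_le_ofReal
            apply le_of_eq
            rw [mul_pow, ← Real.rpow_natCast (1 / (m:ℝ)), ← hd, Real.rpow_add (by positivity),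
              Real.rpow_one]
            field_simp
    set C : ℝ≥0 := K ^ (Module.finrank ℝ E) * b * (2 : ℝ≥0) ^ d + 1 with hC
    have hC0 : C ≠ 0 := by positivity
    have hset : ∀ s : Set E, ediam s ≤ 1 → κ s ≤ C * ediam s ^ d := by
      intro s hs1
      have hcl : MeasurableSet (closure s) := isClosed_closure.measurableSet
      refine (measure_mono subset_closure).trans ?_
      rw [← ediam_closure] at hs1 ⊢
      generalize closure s = u at hs1 hcl
      by_cases h0 : ediam u = 0
      · have : Filter.Tendsto (fun m : ℕ => ENNReal.ofReal (K ^ (Module.finrank ℝ E) * b * (1 / m) ^ d)) Filter.atTop (nhds (ENNReal.ofReal (K ^ (Module.finrank ℝ E) * b * 0 ^ d))) := by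
          refine ENNReal.tendsto_ofReal (Filter.Tendsto.const_mul _ ?_)
          exact (tendsto_const_div_atTop_nhds_zero_nat 1).rpow_const (Or.inr hd1.le)
        rw [Real.zero_rpow hd1.ne', mul_zero, ENNReal.ofReal_zero] at this
        refine (ge_of_tendsto this ?_).trans (by simp)
        filter_upwards [Filter.eventually_gt_atTop 0] with m hm
        exact piece u hcl m hm (by simp [h0])
      · have hfin : ediam u ≠ ∞ := (hs1.trans_lt ENNReal.one_lt_top).ne
        set ρ := (ediam u).toReal with hρ
        have hρe : ediam u = ENNReal.ofReal ρ := (ENNReal.ofReal_toReal hfin).symm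
        have hρ0 : 0 < ρ := ENNReal.toReal_pos h0 hfin
        have hρ1 : ρ ≤ 1 := by
          have := ENNReal.toReal_mono ENNReal.one_ne_top hs1
          simpa using this
        have h1ρ : 1 ≤ 1 / ρ := by rw [le_div_iff₀ hρ0]; linarith
        have hm : 0 < ⌊1 / ρ⌋₊ := Nat.floor_pos.2 h1ρ
        have hmr : (1:ℝ) ≤ (⌊1 / ρ⌋₊ : ℝ) := by exact_mod_cast hm
        have e1 := Nat.floor_le (zero_le_one.trans h1ρ)
        have e2 := Nat.lt_floor_add_one (1 / ρ)
        refine (piece u hcl _ hm ?_).trans ?_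
        · rw [hρe]
          apply ENNReal.ofReal_le_ofReal
          rw [le_div_iff₀ (by linarith)]
          rw [le_div_iff₀ hρ0] at e1
          linarith
        · have hle : 1 / (⌊1 / ρ⌋₊ : ℝ) ≤ 2 * ρ := by
            rw [div_le_iff₀ (by linarith)]
            rw [div_lt_iff₀ hρ0] at e2
            nlinarith
          rw [hρe, ENNReal.ofReal_rpow_of_pos hρ0, ← ENNReal.ofReal_coe_nnreal,
            ← ENNReal.ofReal_mul (by positivity)]
          apply ENNReal.ofReal_le_ofReal
          calc (K:ℝ) ^ (Module.finrank ℝ E) * b * (1 / (⌊1 / ρ⌋₊ : ℝ)) ^ d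
              ≤ (K:ℝ) ^ (Module.finrank ℝ E) * b * (2 * ρ) ^ d := by gcongr
            _ = ((K:ℝ) ^ (Module.finrank ℝ E) * b * 2 ^ d) * ρ ^ d := by
                rw [Real.mul_rpow (by norm_num) hρ0.le]; ring
            _ ≤ (C:ℝ) * ρ ^ d := by
                gcongr
                rw [hC]; push_cast; linarith
    have hle : (C : ℝ≥0∞)⁻¹ • κ ≤ μH[d] := by
      refine Measure.le_hausdorffMeasure d _ 1 one_pos fun s hs => ?_
      rw [Measure.smul_apply, smul_eq_mul]
      rw [ENNReal.inv_mul_le_iff (by simpa using hC0) (by simp)]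
      exact hset s hs
    refine ⟨C, Measure.le_iff.2 fun s hs => ?_⟩
    have e : κ s = κ (s ∩ S) := by
      rw [hκapp s hs, hκapp _ (hs.inter hS)]
      congr 1
      ext p
      simp only [mem_inter_iff, mem_preimage]
      constructor
      · rintro ⟨h, h'⟩; exact ⟨⟨h, hPS p h'⟩, h'⟩
      · rintro ⟨h, h'⟩; exact ⟨h.1, h'⟩
    rw [e, Measure.smul_apply, Measure.restrict_apply hs, smul_eq_mul,
      ← ENNReal.inv_mul_le_iff (by simpa using hC0) (by simp)]
    exact hle (s ∩ S)
  have h2 : ∃ C : ℝ≥0, (μH[d]).restrict S ≤ (C : ℝ≥0∞) • κ := by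
    have : (μH[(Module.finrank ℝ E : ℝ)] : Measure E).IsAddHaarMeasure := inferInstance
    obtain ⟨c, hc⟩ : ∃ c : ℝ≥0, (μH[(Module.finrank ℝ E : ℝ)] : Measure E) = c • μ :=
      ⟨_, Measure.isAddLeftInvariant_eq_smul _ _⟩
    refine ⟨K ^ (d + 1) * c, Measure.le_iff.2 fun s hs => ?_⟩
    rw [Measure.restrict_apply hs, Measure.smul_apply, hκapp s hs, smul_eq_mul]
    have hd1' : 0 ≤ d + 1 := by linarith
    have hL : LipschitzOnWith K (fun p => (P p, N p)) (P ⁻¹' s ∩ N ⁻¹' Icc 1 2) := by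
      refine LipschitzOnWith.of_dist_le_mul fun p hp q hq => ?_
      rw [Prod.dist_eq]
      exact max_le (hlip p q hp.2 hq.2) (hlipN p q hp.2 hq.2)
    have hsub : (s ∩ S) ×ˢ Icc (1:ℝ) 2 ⊆ (fun p => (P p, N p)) '' (P ⁻¹' s ∩ N ⁻¹' Icc 1 2) := by
      rintro ⟨x, t⟩ ⟨⟨hx, hxS⟩, ht⟩
      obtain ⟨p, hp1, hp2⟩ := hsurj x hxS t ht
      refine ⟨p, ⟨?_, ?_⟩, ?_⟩
      · simpa [hp2] using hx
      · simpa [hp1] using ht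
      · simp [hp1, hp2]
    calc μH[d] (s ∩ S) ≤ μH[d + 1] ((s ∩ S) ×ˢ Icc (1:ℝ) 2) :=
          hausdorff_le_prod_interval d hd1.le _
      _ ≤ _ := measure_mono hsub
      _ ≤ (K : ℝ≥0∞) ^ (d + 1) * μH[d + 1] (P ⁻¹' s ∩ N ⁻¹' Icc 1 2) :=
          hL.hausdorffMeasure_image_le hd1'
      _ = _ := by
          rw [hd, hc, Measure.smul_apply, ENNReal.smul_def, smul_eq_mul, ENNReal.coe_mul,
            ENNReal.coe_rpow_of_nonneg _ (by positivity), mul_assoc]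
  obtain ⟨C1, h1⟩ := h1
  obtain ⟨C2, h2⟩ := h2
  refine ⟨max C1 C2, h1.trans ?_, h2.trans ?_⟩ <;>
  · refine Measure.le_iff.2 fun s _ => ?_
    simp only [Measure.smul_apply, smul_eq_mul]
    gcongr
    simp

lemma rpow_sub_abs {t s b : ℝ} (ht : 1 ≤ t) (hs : 1 ≤ s) (hb0 : 0 ≤ b) (hb : b ≤ 1) :
    |t ^ b - s ^ b| ≤ |t - s| := by
  wlog h : s ≤ t generalizing t s
  · rw [abs_sub_comm, abs_sub_comm t s]
    exact this hs ht (le_of_not_ge h)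
  have hs0 : 0 < s := by linarith
  have hq : 1 ≤ t / s := by rw [le_div_iff₀ hs0]; linarith
  have h1 : (t / s) ^ b ≤ t / s := by
    simpa using Real.rpow_le_rpow_of_exponent_le hq hb
  have h2 : s ^ b ≤ s := by simpa using Real.rpow_le_rpow_of_exponent_le hs hb
  have h3 : 0 < s ^ b := Real.rpow_pos_of_pos hs0 b
  have h4 : t ^ b = s ^ b * (t / s) ^ b := by
    rw [← Real.mul_rpow hs0.le (by positivity), mul_div_cancel₀ _ hs0.ne']
  have h5 : 1 ≤ (t / s) ^ b := Real.one_le_rpow hq hb0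
  have h6 : t - s = s * (t / s - 1) := by field_simp
  rw [abs_of_nonneg (by rw [h4]; nlinarith), abs_of_nonneg (by linarith), h4, h6]
  calc s ^ b * (t / s) ^ b - s ^ b = s ^ b * ((t / s) ^ b - 1) := by ring
    _ ≤ s * (t / s - 1) := by
      apply mul_le_mul h2 (by linarith) (by linarith) hs0.le

lemma rpow_neg_sub_abs {t s b : ℝ} (ht : 1 ≤ t) (hs : 1 ≤ s) (hb0 : 0 ≤ b) (hb : b ≤ 1) :
    |t ^ (-b) - s ^ (-b)| ≤ |t - s| := by
  have h1 : 1 ≤ t ^ b := Real.one_le_rpow ht hb0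
  have h2 : 1 ≤ s ^ b := Real.one_le_rpow hs hb0
  have e : t ^ (-b) - s ^ (-b) = (s ^ b - t ^ b) / (t ^ b * s ^ b) := by
    rw [Real.rpow_neg (by linarith), Real.rpow_neg (by linarith)]
    field_simp
  rw [e, abs_div, abs_of_pos (show 0 < t ^ b * s ^ b by positivity), abs_sub_comm (s ^ b)]
  refine (div_le_self (abs_nonneg _) (by nlinarith)).trans (rpow_sub_abs ht hs hb0 hb)

lemma rpow_lip {u v a : ℝ} (ha : 1 ≤ a) (hu : u ∈ Icc (0:ℝ) 2) (hv : v ∈ Icc (0:ℝ) 2) :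
    |u ^ a - v ^ a| ≤ a * 2 ^ a * |u - v| := by
  have := Convex.norm_image_sub_le_of_norm_hasDerivWithin_le (f := fun x : ℝ => x ^ a)
    (f' := fun x => a * x ^ (a - 1)) (s := Icc (0:ℝ) 2) (x := v) (y := u) (C := a * 2 ^ a)
    (fun x hx => (Real.hasDerivAt_rpow_const (Or.inr ha)).hasDerivWithinAt)
    (fun x hx => by
      have h0 : 0 ≤ x ^ (a - 1) := Real.rpow_nonneg hx.1 _
      rw [Real.norm_eq_abs, abs_of_nonneg (by positivity)]
      gcongr
      calc x ^ (a - 1) ≤ 2 ^ (a - 1) := Real.rpow_le_rpow hx.1 hx.2 (by linarith)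
        _ ≤ 2 ^ a := Real.rpow_le_rpow_of_exponent_le (by norm_num) (by linarith))
    (convex_Icc 0 2) hv hu
  simpa using this

lemma contr_est {F : Type*} [NormedAddCommGroup F] [NormedSpace ℝ F] {t s b : ℝ} {u v : F}
    (ht : 1 ≤ t) (hs : 1 ≤ s) (hb0 : 0 ≤ b) (hb : b ≤ 1) (hv : ‖v‖ ≤ 2) :
    ‖t ^ (-b) • u - s ^ (-b) • v‖ ≤ ‖u - v‖ + 2 * |t - s| := by
  have e : t ^ (-b) • u - s ^ (-b) • v = t ^ (-b) • (u - v) + (t ^ (-b) - s ^ (-b)) • v := by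
    rw [smul_sub, sub_smul]; abel
  have h1 : t ^ (-b) ≤ 1 := Real.rpow_le_one_of_one_le_of_nonpos ht (by linarith)
  have h2 := rpow_neg_sub_abs ht hs hb0 hb
  have h3 : 0 ≤ t ^ (-b) := Real.rpow_nonneg (by linarith) _
  rw [e]
  refine (norm_add_le _ _).trans ?_
  rw [norm_smul, norm_smul, Real.norm_eq_abs, Real.norm_eq_abs, abs_of_nonneg h3]
  have := mul_le_mul h2 hv (norm_nonneg _) (abs_nonneg _)
  nlinarith [norm_nonneg (u - v)]

lemma expa_est {F : Type*} [NormedAddCommGroup F] [NormedSpace ℝ F] {t s b : ℝ} {u v : F}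
    (ht : 1 ≤ t) (ht2 : t ≤ 2) (hs : 1 ≤ s) (hb0 : 0 ≤ b) (hb : b ≤ 1) (hv : ‖v‖ ≤ 1) :
    ‖t ^ b • u - s ^ b • v‖ ≤ 2 * ‖u - v‖ + |t - s| := by
  have e : t ^ b • u - s ^ b • v = t ^ b • (u - v) + (t ^ b - s ^ b) • v := by
    rw [smul_sub, sub_smul]; abel
  have h1 : t ^ b ≤ 2 := by
    have : t ^ b ≤ t := by simpa using Real.rpow_le_rpow_of_exponent_le ht hb
    linarith
  have h2 := rpow_sub_abs ht hs hb0 hb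
  have h3 : 0 ≤ t ^ b := Real.rpow_nonneg (by linarith) _
  rw [e]
  refine (norm_add_le _ _).trans ?_
  rw [norm_smul, norm_smul, Real.norm_eq_abs, Real.norm_eq_abs, abs_of_nonneg h3]
  have := mul_le_mul h2 hv (norm_nonneg _) (abs_nonneg _)
  nlinarith [norm_nonneg (u - v)]

lemma le_two_of_rpow {u a : ℝ} (ha : 1 ≤ a) (h : u ^ a ≤ 2) : u ≤ 2 := by
  by_contra hc
  push Not at hc
  have : u ≤ u ^ a := by
    simpa using Real.rpow_le_rpow_of_exponent_le (show 1 ≤ u by linarith) ha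
  linarith

lemma le_one_of_rpow {u a : ℝ} (ha : 1 ≤ a) (h : u ^ a ≤ 1) : u ≤ 1 := by
  by_contra hc
  push Not at hc
  have : u ≤ u ^ a := by
    simpa using Real.rpow_le_rpow_of_exponent_le (show 1 ≤ u by linarith) ha
  linarith

/-- The anisotropic gauge. -/
def NN (n : ℕ) (a₁ a₂ : ℝ) (p : Rn n × Rn n) : ℝ := ‖p.1‖ ^ a₁ + ‖p.2‖ ^ a₂

/-- The anisotropic projection to the surface. -/
def PP (n : ℕ) (a₁ a₂ : ℝ) (p : Rn n × Rn n) : Rn n × Rn n :=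
  (NN n a₁ a₂ p ^ (-(1 / a₁)) • p.1, NN n a₁ a₂ p ^ (-(1 / a₂)) • p.2)

lemma measurable_NN (n : ℕ) (a₁ a₂ : ℝ) : Measurable (NN n a₁ a₂) := by
  unfold NN; fun_prop

lemma measurable_PP (n : ℕ) (a₁ a₂ : ℝ) : Measurable (PP n a₁ a₂) := by
  have := measurable_NN n a₁ a₂
  unfold PP
  fun_prop

lemma norm_scale_rpow {F : Type*} [NormedAddCommGroup F] [NormedSpace ℝ F] {t a : ℝ} (c : ℝ)
    (ht : 0 < t) (u : F) : ‖t ^ c • u‖ ^ a = t ^ (c * a) * ‖u‖ ^ a := by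
  rw [norm_smul, Real.norm_eq_abs, abs_of_pos (Real.rpow_pos_of_pos ht _),
    Real.mul_rpow (by positivity) (norm_nonneg _), ← Real.rpow_mul ht.le]

lemma S2_compare (n : ℕ) (hn : 2 ≤ n) (a₁ a₂ : ℝ) (ha₁ : 1 ≤ a₁) (ha₂ : 1 ≤ a₂) :
    ∃ C : ℝ≥0,
      Measure.map (PP n a₁ a₂) (volume.restrict (NN n a₁ a₂ ⁻¹' Icc 1 2))
        ≤ (C : ℝ≥0∞) • (μH[(2 * (n : ℝ) - 1)]).restrict (S2 n a₁ a₂) ∧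
      (μH[(2 * (n : ℝ) - 1)]).restrict (S2 n a₁ a₂) ≤
        (C : ℝ≥0∞) • Measure.map (PP n a₁ a₂) (volume.restrict (NN n a₁ a₂ ⁻¹' Icc 1 2)) := by
  have hn' : (2:ℝ) ≤ n := by exact_mod_cast hn
  have hb₁ : 0 ≤ 1 / a₁ := by positivity
  have hb₂ : 0 ≤ 1 / a₂ := by positivity
  have hb₁' : 1 / a₁ ≤ 1 := by rw [div_le_one (by linarith)]; exact ha₁
  have hb₂' : 1 / a₂ ≤ 1 := by rw [div_le_one (by linarith)]; exact ha₂
  have hm₁ : 1 / a₁ * a₁ = 1 := by field_simp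
  have hm₂ : 1 / a₂ * a₂ = 1 := by field_simp
  have hy : ∀ p, NN n a₁ a₂ p ∈ Icc (1:ℝ) 2 → ‖p.1‖ ≤ 2 := fun p hp => by
    apply le_two_of_rpow ha₁
    have := hp.2
    unfold NN at this
    linarith [Real.rpow_nonneg (norm_nonneg p.2) a₂]
  have hz : ∀ p, NN n a₁ a₂ p ∈ Icc (1:ℝ) 2 → ‖p.2‖ ≤ 2 := fun p hp => by
    apply le_two_of_rpow ha₂
    have := hp.2
    unfold NN at this
    linarith [Real.rpow_nonneg (norm_nonneg p.1) a₁]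
  have hPS : ∀ p, NN n a₁ a₂ p ∈ Icc (1:ℝ) 2 → PP n a₁ a₂ p ∈ S2 n a₁ a₂ := fun p hp => by
    have h0 : 0 < NN n a₁ a₂ p := by linarith [hp.1]
    simp only [S2, mem_ofPred_eq, PP]
    rw [norm_scale_rpow _ h0, norm_scale_rpow _ h0, neg_mul, neg_mul, hm₁, hm₂, ← mul_add,
      Real.rpow_neg_one]
    exact inv_mul_cancel₀ h0.ne'
  have hS1 : ∀ q ∈ S2 n a₁ a₂, ‖q.1‖ ≤ 1 := fun q hq => by
    apply le_one_of_rpow ha₁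
    have : _ = (1:ℝ) := hq
    linarith [Real.rpow_nonneg (norm_nonneg q.2) a₂]
  have hS2 : ∀ q ∈ S2 n a₁ a₂, ‖q.2‖ ≤ 1 := fun q hq => by
    apply le_one_of_rpow ha₂
    have : _ = (1:ℝ) := hq
    linarith [Real.rpow_nonneg (norm_nonneg q.1) a₁]
  set L : ℝ := a₁ * 2 ^ a₁ + a₂ * 2 ^ a₂ with hL
  have hL0 : 0 ≤ L := by positivity
  have hlipN : ∀ p q, NN n a₁ a₂ p ∈ Icc (1:ℝ) 2 → NN n a₁ a₂ q ∈ Icc (1:ℝ) 2 →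
      |NN n a₁ a₂ p - NN n a₁ a₂ q| ≤ L * dist p q := by
    intro p q hp hq
    have e1 := rpow_lip ha₁ ⟨norm_nonneg p.1, hy p hp⟩ ⟨norm_nonneg q.1, hy q hq⟩
    have e2 := rpow_lip ha₂ ⟨norm_nonneg p.2, hz p hp⟩ ⟨norm_nonneg q.2, hz q hq⟩
    have d1 : |‖p.1‖ - ‖q.1‖| ≤ dist p q :=
      (abs_norm_sub_norm_le _ _).trans (by rw [← dist_eq_norm_sub, Prod.dist_eq]; exact le_max_left _ _)
    have d2 : |‖p.2‖ - ‖q.2‖| ≤ dist p q :=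
      (abs_norm_sub_norm_le _ _).trans (by rw [← dist_eq_norm_sub, Prod.dist_eq]; exact le_max_right _ _)
    have e : NN n a₁ a₂ p - NN n a₁ a₂ q =
        (‖p.1‖ ^ a₁ - ‖q.1‖ ^ a₁) + (‖p.2‖ ^ a₂ - ‖q.2‖ ^ a₂) := by unfold NN; ring
    rw [e]
    refine (abs_add_le _ _).trans ((add_le_add e1 e2).trans ?_)
    rw [hL, add_mul]
    gcongr
  have : (volume : Measure (Rn n × Rn n)).IsAddHaarMeasure :=
    Measure.prod.instIsAddHaarMeasure volume volume
  refine cone_compare volume (2 * (n:ℝ) - 1) ?_ (by linarith) (NN n a₁ a₂) (PP n a₁ a₂)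
    (measurable_NN n a₁ a₂) (measurable_PP n a₁ a₂) (S2 n a₁ a₂) ?_ (3 + 2 * L).toNNReal
    hPS ?_ ?_ ?_ ?_
  · rw [Module.finrank_prod, finrank_euclideanSpace_fin]; push_cast; ring
  · exact (measurable_NN n a₁ a₂) (measurableSet_singleton 1)
  · intro x hx t ht
    have ht0 : 0 < t := by linarith [ht.1]
    have hN : NN n a₁ a₂ (t ^ (1 / a₁) • x.1, t ^ (1 / a₂) • x.2) = t := by
      have : _ = (1:ℝ) := hx
      simp only [NN]
      rw [norm_scale_rpow _ ht0, norm_scale_rpow _ ht0, hm₁, hm₂, ← mul_add, this]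
      simp
    refine ⟨(t ^ (1 / a₁) • x.1, t ^ (1 / a₂) • x.2), hN, ?_⟩
    unfold PP
    rw [hN]
    simp only [smul_smul]
    rw [← Real.rpow_add ht0, ← Real.rpow_add ht0]
    simp
  · intro p q hp hq
    rw [Real.coe_toNNReal _ (by linarith)]
    have d1 : ‖p.1 - q.1‖ ≤ dist p q := by
      rw [← dist_eq_norm_sub, Prod.dist_eq]; exact le_max_left _ _
    have d2 : ‖p.2 - q.2‖ ≤ dist p q := by
      rw [← dist_eq_norm_sub, Prod.dist_eq]; exact le_max_right _ _
    have := hlipN p q hp hq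
    rw [Prod.dist_eq]
    refine max_le ?_ ?_
    · rw [dist_eq_norm_sub]
      refine (contr_est hp.1 hq.1 hb₁ hb₁' (hy q hq)).trans ?_
      linarith [dist_nonneg (x := p) (y := q)]
    · rw [dist_eq_norm_sub]
      refine (contr_est hp.1 hq.1 hb₂ hb₂' (hz q hq)).trans ?_
      linarith [dist_nonneg (x := p) (y := q)]
  · intro p q hp hq
    rw [Real.coe_toNNReal _ (by linarith), Real.dist_eq]
    refine (hlipN p q hp hq).trans ?_
    gcongr
    linarith
  · intro p q hp hq
    rw [Real.coe_toNNReal _ (by linarith)]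
    set M := max (dist (PP n a₁ a₂ p) (PP n a₁ a₂ q)) (dist (NN n a₁ a₂ p) (NN n a₁ a₂ q)) with hM
    have hp0 : 0 < NN n a₁ a₂ p := by linarith [hp.1]
    have hq0 : 0 < NN n a₁ a₂ q := by linarith [hq.1]
    have d1 : ‖(PP n a₁ a₂ p).1 - (PP n a₁ a₂ q).1‖ ≤ M := by
      refine le_trans ?_ (le_max_left _ _)
      rw [← dist_eq_norm_sub, Prod.dist_eq]; exact le_max_left _ _
    have d2 : ‖(PP n a₁ a₂ p).2 - (PP n a₁ a₂ q).2‖ ≤ M := by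
      refine le_trans ?_ (le_max_left _ _)
      rw [← dist_eq_norm_sub, Prod.dist_eq]; exact le_max_right _ _
    have d3 : |NN n a₁ a₂ p - NN n a₁ a₂ q| ≤ M := le_max_right _ _
    have hM0 : 0 ≤ M := (norm_nonneg _).trans d1
    have r1 : ∀ p, 0 < NN n a₁ a₂ p → p.1 = NN n a₁ a₂ p ^ (1 / a₁) • (PP n a₁ a₂ p).1 := by
      intro p hp
      simp only [PP, smul_smul]
      rw [← Real.rpow_add hp]; simp
    have r2 : ∀ p, 0 < NN n a₁ a₂ p → p.2 = NN n a₁ a₂ p ^ (1 / a₂) • (PP n a₁ a₂ p).2 := by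
      intro p hp
      simp only [PP, smul_smul]
      rw [← Real.rpow_add hp]; simp
    have hLM : 0 ≤ L * M := by positivity
    rw [Prod.dist_eq]
    refine max_le ?_ ?_
    · rw [dist_eq_norm_sub, r1 p hp0, r1 q hq0]
      refine (expa_est hp.1 hp.2 hq.1 hb₁ hb₁' (hS1 _ (hPS q hq))).trans ?_
      linarith
    · rw [dist_eq_norm_sub, r2 p hp0, r2 q hq0]
      refine (expa_est hp.1 hp.2 hq.1 hb₂ hb₂' (hS2 _ (hPS q hq))).trans ?_
      linarith

lemma sph_compare (n : ℕ) (hn : 2 ≤ n) :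
    ∃ C : ℝ≥0,
      Measure.map (fun x : Rn n => ‖x‖ ^ (-(1:ℝ)) • x) (volume.restrict (norm ⁻¹' Icc 1 2))
        ≤ (C : ℝ≥0∞) • μSph n ∧
      μSph n ≤ (C : ℝ≥0∞) •
        Measure.map (fun x : Rn n => ‖x‖ ^ (-(1:ℝ)) • x) (volume.restrict (norm ⁻¹' Icc 1 2)) := by
  have hn' : (2:ℝ) ≤ n := by exact_mod_cast hn
  have hPS : ∀ p : Rn n, ‖p‖ ∈ Icc (1:ℝ) 2 → ‖p‖ ^ (-(1:ℝ)) • p ∈ sphere (0 : Rn n) 1 := by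
    intro p hp
    have h0 : 0 < ‖p‖ := by linarith [hp.1]
    rw [mem_sphere_zero_iff_norm, norm_smul, Real.norm_eq_abs,
      abs_of_pos (Real.rpow_pos_of_pos h0 _), Real.rpow_neg_one]
    exact inv_mul_cancel₀ h0.ne'
  have hlipN : ∀ p q : Rn n, |‖p‖ - ‖q‖| ≤ dist p q := fun p q => by
    rw [dist_eq_norm_sub]; exact abs_norm_sub_norm_le _ _
  refine cone_compare volume ((n:ℝ) - 1) ?_ (by linarith) norm
    (fun x : Rn n => ‖x‖ ^ (-(1:ℝ)) • x) measurable_norm (by fun_prop) (sphere (0 : Rn n) 1)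
    isClosed_sphere.measurableSet 3 hPS ?_ ?_ ?_ ?_
  · rw [finrank_euclideanSpace_fin]; ring
  · intro x hx t ht
    have ht0 : 0 < t := by linarith [ht.1]
    have hN : ‖t • x‖ = t := by
      rw [norm_smul, mem_sphere_zero_iff_norm.1 hx, Real.norm_eq_abs, abs_of_pos ht0, mul_one]
    refine ⟨t • x, hN, ?_⟩
    simp only [hN, smul_smul]
    rw [Real.rpow_neg_one, inv_mul_cancel₀ ht0.ne', one_smul]
  · intro p q hp hq
    rw [dist_eq_norm_sub]
    refine (contr_est hp.1 hq.1 zero_le_one le_rfl hq.2).trans ?_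
    have := hlipN p q
    rw [← dist_eq_norm_sub]
    push_cast
    linarith
  · intro p q hp hq
    rw [Real.dist_eq]
    have := hlipN p q
    push_cast
    linarith [dist_nonneg (x := p) (y := q)]
  · intro p q hp hq
    have r : ∀ p : Rn n, ‖p‖ ∈ Icc (1:ℝ) 2 → p = ‖p‖ ^ (1:ℝ) • (‖p‖ ^ (-(1:ℝ)) • p) := by
      intro p hp
      have h0 : 0 < ‖p‖ := by linarith [hp.1]
      rw [smul_smul, ← Real.rpow_add h0]; simp
    have e := expa_est (u := ‖p‖ ^ (-(1:ℝ)) • p) (v := ‖q‖ ^ (-(1:ℝ)) • q) hp.1 hp.2 hq.1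
      zero_le_one le_rfl (mem_sphere_zero_iff_norm.1 (hPS q hq)).le
    rw [← r p hp, ← r q hq, ← dist_eq_norm_sub, ← dist_eq_norm_sub, ← Real.dist_eq] at e
    refine e.trans ?_
    push_cast
    have e1 := le_max_left (dist (‖p‖ ^ (-(1:ℝ)) • p) (‖q‖ ^ (-(1:ℝ)) • q)) (dist ‖p‖ ‖q‖)
    have e2 := le_max_right (dist (‖p‖ ^ (-(1:ℝ)) • p) (‖q‖ ^ (-(1:ℝ)) • q)) (dist ‖p‖ ‖q‖)
    linarith

lemma polar_lintegral (n : ℕ) (hn : 2 ≤ n) (h : Rn n → ℝ≥0∞) (hh : Measurable h) :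
    ∫⁻ z, h z = ∫⁻ θ : sphere (0 : Rn n) 1, (∫⁻ s in Ioi (0:ℝ),
      ENNReal.ofReal (s ^ (n - 1)) * h (s • (θ : Rn n))) ∂(volume : Measure (Rn n)).toSphere := by
  have : Nontrivial (Rn n) := by
    apply Module.nontrivial_of_finrank_pos (R := ℝ)
    rw [finrank_euclideanSpace_fin]; omega
  have hmp := (volume : Measure (Rn n)).measurePreserving_homeomorphUnitSphereProd
  have e1 : ∫⁻ z, h z = ∫⁻ z in ({0} : Set (Rn n))ᶜ, h z := by
    rw [restrict_compl_singleton]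
  have e2 : ∫⁻ z in ({0} : Set (Rn n))ᶜ, h z =
      ∫⁻ z : (({0} : Set (Rn n))ᶜ : Set (Rn n)), h z ∂(Measure.comap Subtype.val volume) :=
    (lintegral_subtype_comap (measurableSet_singleton _).compl _).symm
  have e3 : ∫⁻ z : (({0} : Set (Rn n))ᶜ : Set (Rn n)), h z ∂(Measure.comap Subtype.val volume) =
      ∫⁻ q, h (q.2.1 • (q.1 : Rn n)) ∂((volume : Measure (Rn n)).toSphere.prod
        (Measure.volumeIoiPow (Module.finrank ℝ (Rn n) - 1))) := by
    rw [← hmp.lintegral_comp (by fun_prop)]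
    refine lintegral_congr fun z => ?_
    have hz : ‖(z : Rn n)‖ ≠ 0 := norm_ne_zero_iff.2 z.2
    simp [homeomorphUnitSphereProd, smul_smul, hz]
  rw [e1, e2, e3, lintegral_prod _ (by fun_prop), finrank_euclideanSpace_fin]
  refine lintegral_congr fun θ => ?_
  rw [Measure.volumeIoiPow, lintegral_withDensity_eq_lintegral_mul _ (by fun_prop) (by fun_prop)]
  rw [← lintegral_subtype_comap measurableSet_Ioi]
  rfl

lemma const_Icc {k : ℝ → ℝ} (hk : ContinuousOn k (Icc 1 2)) (hpos : ∀ t ∈ Icc (1:ℝ) 2, 0 < k t) :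
    ∃ K : ℝ≥0, K ≠ 0 ∧ ∫⁻ t in Icc (1:ℝ) 2, ENNReal.ofReal (k t) = K := by
  have hfin : ∫⁻ t in Icc (1:ℝ) 2, ENNReal.ofReal (k t) ≠ ∞ := by
    have := (hk.integrableOn_compact isCompact_Icc (μ := volume)).lintegral_lt_top
    exact this.ne
  have h0 : ∫⁻ t in Icc (1:ℝ) 2, ENNReal.ofReal (k t) ≠ 0 := by
    intro h
    rw [lintegral_eq_zero_iff' (hk.aemeasurable measurableSet_Icc).ennreal_ofReal] at h
    have h2 : ∀ᵐ t ∂(volume.restrict (Icc (1:ℝ) 2)), False := by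
      filter_upwards [h, ae_restrict_mem measurableSet_Icc] with t ht ht2
      have := hpos t ht2
      simp at ht
      linarith
    rw [ae_iff] at h2
    norm_num at h2
  refine ⟨(∫⁻ t in Icc (1:ℝ) 2, ENNReal.ofReal (k t)).toNNReal, ?_, ?_⟩
  · exact (ENNReal.toNNReal_ne_zero).2 ⟨h0, hfin⟩
  · rw [ENNReal.coe_toNNReal hfin]

/-- Spherical Hausdorff measure is comparable to the polar sphere measure. -/
lemma sph_polar (n : ℕ) (hn : 2 ≤ n) : ∃ C : ℝ≥0, ∀ F : Rn n → ℝ≥0∞, Measurable F →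
    (∫⁻ θ, F θ ∂(μSph n) ≤
      C * ∫⁻ θ : sphere (0 : Rn n) 1, F θ ∂(volume : Measure (Rn n)).toSphere) ∧
    (∫⁻ θ : sphere (0 : Rn n) 1, F θ ∂(volume : Measure (Rn n)).toSphere ≤
      C * ∫⁻ θ, F θ ∂(μSph n)) := by
  obtain ⟨C, h1, h2⟩ := sph_compare n hn
  obtain ⟨K, hK0, hK⟩ := const_Icc (k := fun s => s ^ (n - 1)) (by fun_prop)
    (fun t ht => pow_pos (by linarith [ht.1]) _)
  have hK0' : (K : ℝ≥0∞) ≠ 0 := by simpa using hK0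
  have key : ∀ F : Rn n → ℝ≥0∞, Measurable F →
      ∫⁻ x, F x ∂(Measure.map (fun x : Rn n => ‖x‖ ^ (-(1:ℝ)) • x)
        (volume.restrict (norm ⁻¹' Icc 1 2))) =
      K * ∫⁻ θ : sphere (0 : Rn n) 1, F θ ∂(volume : Measure (Rn n)).toSphere := by
    intro F hF
    have hms : MeasurableSet ((norm : Rn n → ℝ) ⁻¹' Icc 1 2) := measurable_norm measurableSet_Icc
    rw [lintegral_map hF (by fun_prop), ← lintegral_indicator hms,
      polar_lintegral n hn _ ((by fun_prop : Measurable
        (fun x : Rn n => F (‖x‖ ^ (-(1:ℝ)) • x))).indicator hms),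
      ← lintegral_const_mul _ (by fun_prop)]
    refine lintegral_congr fun θ => ?_
    rw [← hK, ← lintegral_mul_const _ (by fun_prop)]
    have hsub : Icc (1:ℝ) 2 ⊆ Ioi 0 := fun t ht => by
      have := ht.1
      simp only [mem_Ioi]; linarith
    have hI : ∀ f : ℝ → ℝ≥0∞, ∫⁻ s in Icc (1:ℝ) 2, f s =
        ∫⁻ s in Ioi (0:ℝ), (Icc (1:ℝ) 2).indicator f s := fun f => by
      rw [setLIntegral_indicator measurableSet_Icc, inter_eq_self_of_subset_left hsub]
    rw [hI]
    refine setLIntegral_congr_fun measurableSet_Ioi fun s hs => ?_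
    have hs0 : 0 < s := hs
    have hN : ‖s • (θ : Rn n)‖ = s := by
      rw [norm_smul, mem_sphere_zero_iff_norm.1 θ.2, Real.norm_eq_abs, abs_of_pos hs0, mul_one]
    by_cases h : s ∈ Icc (1:ℝ) 2
    · rw [indicator_of_mem h, indicator_of_mem (by simpa [hN] using h)]
      rw [hN, smul_smul, Real.rpow_neg_one, inv_mul_cancel₀ hs0.ne', one_smul]
    · rw [indicator_of_notMem h, indicator_of_notMem (by simpa [hN] using h), mul_zero]
  refine ⟨max (C * K) (K⁻¹ * C), fun F hF => ⟨?_, ?_⟩⟩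
  · calc _ ≤ _ := lintegral_mono' h2 le_rfl
      _ = ((C * K : ℝ≥0) : ℝ≥0∞) * _ := by
        rw [lintegral_smul_measure, key F hF, smul_eq_mul, ENNReal.coe_mul, mul_assoc]
      _ ≤ _ := by gcongr; exact le_max_left _ _
  · have h3 := lintegral_mono' h1 (le_refl F)
    rw [key F hF, lintegral_smul_measure, smul_eq_mul] at h3
    calc _ ≤ ((K⁻¹ * C : ℝ≥0) : ℝ≥0∞) * ∫⁻ θ, F θ ∂(μSph n) := by
          rw [ENNReal.coe_mul, ENNReal.coe_inv hK0, mul_assoc,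
            ← ENNReal.mul_le_iff_le_inv hK0' (by simp)]
          exact h3
      _ ≤ _ := by gcongr; exact le_max_right _ _

lemma subst_lintegral {a : ℝ} (ha : 1 ≤ a) (r : ℝ) (G : ℝ → ℝ≥0∞) :
    ∫⁻ s in Ioi (0:ℝ), G s = ∫⁻ t in Ioi r,
      ENNReal.ofReal (1 / a * (t - r) ^ (1 / a - 1)) * G ((t - r) ^ (1 / a)) := by
  have ha0 : 0 < a := by linarith
  have him : (fun t : ℝ => (t - r) ^ (1 / a)) '' Ioi r = Ioi 0 := by
    ext s
    constructor
    · rintro ⟨t, ht, rfl⟩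
      exact Real.rpow_pos_of_pos (sub_pos.2 ht) _
    · intro hs
      have hs0 : 0 < s := hs
      refine ⟨r + s ^ a, ?_, ?_⟩
      · simp only [mem_Ioi]; linarith [Real.rpow_pos_of_pos hs0 a]
      · simp only [add_sub_cancel_left]
        rw [← Real.rpow_mul hs0.le, mul_one_div_cancel ha0.ne', Real.rpow_one]
  rw [← him, lintegral_image_eq_lintegral_abs_deriv_mul measurableSet_Ioi
    (f' := fun t => 1 / a * (t - r) ^ (1 / a - 1))]
  · refine setLIntegral_congr_fun measurableSet_Ioi fun t ht => ?_
    have : 0 < t - r := sub_pos.2 ht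
    rw [abs_of_pos (mul_pos (by positivity) (Real.rpow_pos_of_pos this _))]
  · intro t ht
    have : 0 < t - r := sub_pos.2 ht
    have := ((hasDerivAt_id t).sub_const r).rpow_const (p := 1 / a) (Or.inl this.ne')
    simpa using this.hasDerivWithinAt
  · intro t ht t' ht' h
    have h1 : 0 < t - r := sub_pos.2 ht
    have h2 : 0 < t' - r := sub_pos.2 ht'
    have := Real.rpow_left_injOn (x := 1 / a) (by positivity) h1.le h2.le h
    linarith

lemma scale_lintegral (n : ℕ) (c : ℝ) (hc : 0 < c) (Q : Rn n → ℝ≥0∞) (hQ : Measurable Q) :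
    ∫⁻ y, Q (c⁻¹ • y) = ENNReal.ofReal (c ^ n) * ∫⁻ y, Q y := by
  have h := Measure.map_addHaar_smul (volume : Measure (Rn n)) (r := c⁻¹) (by positivity)
  have h2 : ∫⁻ y, Q (c⁻¹ • y) = ∫⁻ y, Q y ∂(Measure.map (c⁻¹ • ·) (volume : Measure (Rn n))) :=
    (lintegral_map hQ (by fun_prop)).symm
  rw [h2, h, lintegral_smul_measure, finrank_euclideanSpace_fin, smul_eq_mul]
  congr 2
  rw [inv_pow, inv_inv, abs_of_pos (by positivity)]

/-- The integrand in polar coordinates. -/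
def Phi (n : ℕ) (a₁ a₂ : ℝ) (F : Rn n × Rn n → ℝ≥0∞) (y θ : Rn n) (t : ℝ) : ℝ≥0∞ :=
  {q : Rn n × ℝ | ‖q.1‖ ^ a₁ < q.2}.indicator (fun q =>
    ENNReal.ofReal (1 / a₂ * (q.2 - ‖q.1‖ ^ a₁) ^ (n / a₂ - 1)) *
      F (q.2 ^ (-(1 / a₁)) • q.1,
        (q.2 ^ (-(1 / a₂)) * (q.2 - ‖q.1‖ ^ a₁) ^ (1 / a₂)) • θ)) (y, t)

lemma measurable_Phi (n : ℕ) (a₁ a₂ : ℝ) (F : Rn n × Rn n → ℝ≥0∞) (hF : Measurable F) :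
    Measurable (fun q : Rn n × Rn n × ℝ => Phi n a₁ a₂ F q.1 q.2.1 q.2.2) := by
  have hs : MeasurableSet {q : Rn n × Rn n × ℝ | ‖q.1‖ ^ a₁ < q.2.2} :=
    measurableSet_lt (by fun_prop) (by fun_prop)
  have : (fun q : Rn n × Rn n × ℝ => Phi n a₁ a₂ F q.1 q.2.1 q.2.2) =
      {q : Rn n × Rn n × ℝ | ‖q.1‖ ^ a₁ < q.2.2}.indicator (fun q =>
        ENNReal.ofReal (1 / a₂ * (q.2.2 - ‖q.1‖ ^ a₁) ^ (n / a₂ - 1)) *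
        F (q.2.2 ^ (-(1 / a₁)) • q.1,
        (q.2.2 ^ (-(1 / a₂)) * (q.2.2 - ‖q.1‖ ^ a₁) ^ (1 / a₂)) • q.2.1)) := by
    funext q
    unfold Phi
    by_cases h : ‖q.1‖ ^ a₁ < q.2.2
    · rw [indicator_of_mem (by simpa using h), indicator_of_mem (by simpa using h)]
    · rw [indicator_of_notMem (by simpa using h), indicator_of_notMem (by simpa using h)]
  rw [this]
  exact Measurable.indicator (by fun_prop) hs

lemma stepA (n : ℕ) (hn : 2 ≤ n) (a₁ a₂ : ℝ) (ha₂ : 1 ≤ a₂)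
    (F : Rn n × Rn n → ℝ≥0∞) (hF : Measurable F) (y : Rn n) :
    ∫⁻ z, (NN n a₁ a₂ ⁻¹' Icc 1 2).indicator (fun p => F (PP n a₁ a₂ p)) (y, z) =
    ∫⁻ θ : sphere (0 : Rn n) 1, (∫⁻ t in Icc (1:ℝ) 2, Phi n a₁ a₂ F y θ t)
      ∂(volume : Measure (Rn n)).toSphere := by
  have ha₂0 : 0 < a₂ := by linarith
  have hms : MeasurableSet (NN n a₁ a₂ ⁻¹' Icc 1 2) := measurable_NN n a₁ a₂ measurableSet_Icc
  have hH : Measurable ((NN n a₁ a₂ ⁻¹' Icc 1 2).indicator (fun p => F (PP n a₁ a₂ p))) :=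
    (hF.comp (measurable_PP n a₁ a₂)).indicator hms
  rw [polar_lintegral n hn (fun z => (NN n a₁ a₂ ⁻¹' Icc 1 2).indicator
    (fun p => F (PP n a₁ a₂ p)) (y, z)) (by fun_prop)]
  refine lintegral_congr fun θ => ?_
  rw [subst_lintegral ha₂ (‖y‖ ^ a₁), ← lintegral_indicator measurableSet_Ioi,
    ← lintegral_indicator measurableSet_Icc]
  refine lintegral_congr fun t => ?_
  by_cases ht : ‖y‖ ^ a₁ < t
  · rw [indicator_of_mem (by simpa using ht)]
    have hr : 0 < t - ‖y‖ ^ a₁ := sub_pos.2 ht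
    have hNN : NN n a₁ a₂ (y, (t - ‖y‖ ^ a₁) ^ (1 / a₂) • (θ : Rn n)) = t := by
      simp only [NN]
      rw [norm_scale_rpow _ hr, mem_sphere_zero_iff_norm.1 θ.2, one_div_mul_cancel ha₂0.ne']
      simp
    by_cases ht2 : t ∈ Icc (1:ℝ) 2
    · rw [indicator_of_mem ht2, indicator_of_mem (by rw [mem_preimage, hNN]; exact ht2)]
      unfold Phi
      rw [indicator_of_mem (by simpa using ht), ← mul_assoc, ← ENNReal.ofReal_mul (by positivity)]
      simp only [PP]
      rw [hNN, smul_smul]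
      congr 2
      rw [← Real.rpow_natCast, ← Real.rpow_mul hr.le, mul_assoc, ← Real.rpow_add hr]
      congr 2
      rw [Nat.cast_sub (by omega)]
      push_cast
      field_simp
      ring
    · rw [indicator_of_notMem ht2, indicator_of_notMem (by rw [mem_preimage, hNN]; exact ht2)]
      simp
  · rw [indicator_of_notMem (by simpa using ht)]
    by_cases ht2 : t ∈ Icc (1:ℝ) 2
    · rw [indicator_of_mem ht2]
      unfold Phi
      rw [indicator_of_notMem (by simpa using ht)]
    · rw [indicator_of_notMem ht2]

lemma stepC (n : ℕ) (a₁ a₂ : ℝ) (ha₁ : 1 ≤ a₁) (ha₂ : 1 ≤ a₂)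
    (F : Rn n × Rn n → ℝ≥0∞) (hF : Measurable F) (θ : Rn n) (t : ℝ) (ht : 0 < t) :
    ∫⁻ y, Phi n a₁ a₂ F y θ t =
      ENNReal.ofReal ((t ^ (1 / a₁)) ^ n * (1 / a₂ * t ^ (n / a₂ - 1))) *
      ∫⁻ y in ball (0 : Rn n) 1, ENNReal.ofReal ((omegaW a₁ a₂ y) ^ ((n : ℝ) - a₂)) *
        F (y, omegaW a₁ a₂ y • θ) := by
  have ha₂0 : 0 < a₂ := by linarith
  have ha₁0 : 0 < a₁ := by linarith
  have hc : 0 < t ^ (1 / a₁) := Real.rpow_pos_of_pos ht _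
  have hmo : Measurable (fun y : Rn n => omegaW a₁ a₂ y) := by unfold omegaW; fun_prop
  have hQ : Measurable ((ball (0 : Rn n) 1).indicator fun y =>
      ENNReal.ofReal ((omegaW a₁ a₂ y) ^ ((n : ℝ) - a₂)) * F (y, omegaW a₁ a₂ y • θ)) :=
    Measurable.indicator (by fun_prop) measurableSet_ball
  rw [ENNReal.ofReal_mul (by positivity), mul_right_comm, ← lintegral_indicator measurableSet_ball,
    ← scale_lintegral n _ hc _ hQ, mul_comm, ← lintegral_const_mul _ (by fun_prop)]
  refine lintegral_congr fun y => ?_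
  have hy : ‖(t ^ (1 / a₁))⁻¹ • y‖ ^ a₁ = t⁻¹ * ‖y‖ ^ a₁ := by
    rw [← Real.rpow_neg ht.le, norm_scale_rpow _ ht, neg_mul, one_div_mul_cancel ha₁0.ne',
      Real.rpow_neg_one]
  have hiff : ‖y‖ ^ a₁ < t ↔ (t ^ (1 / a₁))⁻¹ • y ∈ ball (0 : Rn n) 1 := by
    rw [mem_ball_zero_iff, ← Real.rpow_lt_rpow_iff (norm_nonneg _) zero_le_one ha₁0, hy,
      Real.one_rpow, inv_mul_lt_iff₀ ht, mul_one]
  unfold Phi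
  by_cases h : ‖y‖ ^ a₁ < t
  · rw [indicator_of_mem (by simpa using h), indicator_of_mem (hiff.1 h)]
    have hr : 0 < t - ‖y‖ ^ a₁ := sub_pos.2 h
    have hw : 1 - t⁻¹ * ‖y‖ ^ a₁ = t⁻¹ * (t - ‖y‖ ^ a₁) := by field_simp
    have hom : omegaW a₁ a₂ ((t ^ (1 / a₁))⁻¹ • y) =
        t ^ (-(1 / a₂)) * (t - ‖y‖ ^ a₁) ^ (1 / a₂) := by
      unfold omegaW
      rw [hy, hw, Real.mul_rpow (by positivity) hr.le, Real.inv_rpow ht.le, Real.rpow_neg ht.le]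
    rw [hom, ← mul_assoc, ← ENNReal.ofReal_mul (by positivity), ← Real.rpow_neg ht.le]
    congr 2
    rw [Real.mul_rpow (by positivity) (by positivity), ← Real.rpow_mul ht.le,
      ← Real.rpow_mul hr.le]
    have e1 : -(1 / a₂) * ((n:ℝ) - a₂) = -((n:ℝ) / a₂ - 1) := by field_simp
    have e2 : (1 / a₂) * ((n:ℝ) - a₂) = ((n:ℝ) / a₂ - 1) := by field_simp
    rw [e1, e2, Real.rpow_neg ht.le]
    have : t ^ ((n:ℝ) / a₂ - 1) ≠ 0 := (Real.rpow_pos_of_pos ht _).ne'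
    field_simp
  · rw [indicator_of_notMem (by simpa using h), indicator_of_notMem (fun h' => h (hiff.2 h')),
      mul_zero]

/-- Exact slicing of the cone measure. -/
lemma cone_slice (n : ℕ) (hn : 2 ≤ n) (a₁ a₂ : ℝ) (ha₁ : 1 ≤ a₁) (ha₂ : 1 ≤ a₂) :
    ∃ K : ℝ≥0, K ≠ 0 ∧ ∀ F : Rn n × Rn n → ℝ≥0∞, Measurable F →
    ∫⁻ p, F p ∂(Measure.map (PP n a₁ a₂) (volume.restrict (NN n a₁ a₂ ⁻¹' Icc 1 2))) =
      K * ∫⁻ y in ball (0 : Rn n) 1, ENNReal.ofReal ((omegaW a₁ a₂ y) ^ ((n : ℝ) - a₂)) *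
        ∫⁻ θ : sphere (0 : Rn n) 1, F (y, omegaW a₁ a₂ y • (θ : Rn n))
          ∂(volume : Measure (Rn n)).toSphere := by
  have ha₂0 : 0 < a₂ := by linarith
  obtain ⟨K, hK0, hK⟩ := const_Icc
    (k := fun t => (t ^ (1 / a₁)) ^ n * (1 / a₂ * t ^ ((n:ℝ) / a₂ - 1)))
    (by
      have : ∀ c : ℝ, ContinuousOn (fun t : ℝ => t ^ c) (Icc 1 2) := fun c =>
        continuousOn_id.rpow_const fun t ht => Or.inl (by have := ht.1; simp only [id]; linarith)
      exact ((this _).pow n).mul (continuousOn_const.mul (this _)))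
    (fun t ht => by
      have : 0 < t := by linarith [ht.1]
      positivity)
  refine ⟨K, hK0, fun F hF => ?_⟩
  have hms : MeasurableSet (NN n a₁ a₂ ⁻¹' Icc 1 2) := measurable_NN n a₁ a₂ measurableSet_Icc
  have hH : Measurable ((NN n a₁ a₂ ⁻¹' Icc 1 2).indicator (fun p => F (PP n a₁ a₂ p))) :=
    (hF.comp (measurable_PP n a₁ a₂)).indicator hms
  have hPhi := measurable_Phi n a₁ a₂ F hF
  have hmo : Measurable (fun y : Rn n => omegaW a₁ a₂ y) := by unfold omegaW; fun_prop
  have m1 : Measurable (fun q : (Rn n × sphere (0 : Rn n) 1) × ℝ =>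
      Phi n a₁ a₂ F q.1.1 q.1.2 q.2) :=
    hPhi.comp (f := fun q : (Rn n × sphere (0 : Rn n) 1) × ℝ => (q.1.1, (q.1.2 : Rn n), q.2))
      (by fun_prop)
  have m2 : ∀ θ : Rn n, Measurable (fun q : Rn n × ℝ => Phi n a₁ a₂ F q.1 θ q.2) := fun θ =>
    hPhi.comp (f := fun q : Rn n × ℝ => (q.1, θ, q.2)) (by fun_prop)
  rw [lintegral_map hF (measurable_PP n a₁ a₂), ← lintegral_indicator hms,
    Measure.volume_eq_prod, lintegral_prod _ hH.aemeasurable]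
  calc _ = ∫⁻ y, ∫⁻ θ : sphere (0 : Rn n) 1, (∫⁻ t in Icc (1:ℝ) 2, Phi n a₁ a₂ F y θ t)
      ∂(volume : Measure (Rn n)).toSphere := lintegral_congr fun y => stepA n hn a₁ a₂ ha₂ F hF y
    _ = ∫⁻ θ : sphere (0 : Rn n) 1, (∫⁻ y, ∫⁻ t in Icc (1:ℝ) 2, Phi n a₁ a₂ F y θ t)
      ∂(volume : Measure (Rn n)).toSphere := by
        refine lintegral_lintegral_swap ?_
        exact (Measurable.lintegral_prod_right' m1).aemeasurable
    _ = ∫⁻ θ : sphere (0 : Rn n) 1, (∫⁻ t in Icc (1:ℝ) 2, ∫⁻ y, Phi n a₁ a₂ F y θ t)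
      ∂(volume : Measure (Rn n)).toSphere := by
        refine lintegral_congr fun θ => ?_
        exact lintegral_lintegral_swap (m2 θ).aemeasurable
    _ = ∫⁻ θ : sphere (0 : Rn n) 1, (K * ∫⁻ y in ball (0 : Rn n) 1,
          ENNReal.ofReal ((omegaW a₁ a₂ y) ^ ((n : ℝ) - a₂)) * F (y, omegaW a₁ a₂ y • (θ : Rn n)))
      ∂(volume : Measure (Rn n)).toSphere := by
        refine lintegral_congr fun θ => ?_
        rw [← hK, ← lintegral_mul_const _ (by fun_prop)]
        refine setLIntegral_congr_fun measurableSet_Icc fun t ht => ?_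
        exact stepC n a₁ a₂ ha₁ ha₂ F hF θ t (by linarith [ht.1])
    _ = _ := by
        rw [lintegral_const_mul' _ _ ENNReal.coe_ne_top, lintegral_lintegral_swap]
        · congr 1
          refine lintegral_congr fun y => ?_
          rw [lintegral_const_mul _ (by fun_prop)]
        · exact Measurable.aemeasurable (by fun_prop)

lemma S2_mass (n : ℕ) (hn : 2 ≤ n) (a₁ a₂ : ℝ) (ha₁ : 1 ≤ a₁) (ha₂ : 1 ≤ a₂) :
    μH[(2 * (n : ℝ) - 1)] (S2 n a₁ a₂) ≠ 0 ∧ μH[(2 * (n : ℝ) - 1)] (S2 n a₁ a₂) ≠ ∞ := by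
  obtain ⟨C, h1, h2⟩ := S2_compare n hn a₁ a₂ ha₁ ha₂
  have ha₁0 : 0 < a₁ := by linarith
  have ha₂0 : 0 < a₂ := by linarith
  have e1 := h1 univ
  have e2 := h2 univ
  rw [Measure.map_apply (measurable_PP n a₁ a₂) MeasurableSet.univ, preimage_univ,
    Measure.smul_apply, Measure.restrict_apply_univ, Measure.restrict_apply_univ,
    smul_eq_mul] at e1
  rw [Measure.smul_apply, Measure.map_apply (measurable_PP n a₁ a₂) MeasurableSet.univ,
    preimage_univ, Measure.restrict_apply_univ, Measure.restrict_apply_univ,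
    smul_eq_mul] at e2
  have hcont : Continuous (NN n a₁ a₂) := by
    unfold NN
    exact (continuous_fst.norm.rpow_const fun _ => Or.inr ha₁0.le).add
      (continuous_snd.norm.rpow_const fun _ => Or.inr ha₂0.le)
  constructor
  · intro h0
    rw [h0, mul_zero] at e1
    have hop : IsOpen (NN n a₁ a₂ ⁻¹' Ioo 1 2) := isOpen_Ioo.preimage hcont
    have hne : (NN n a₁ a₂ ⁻¹' Ioo 1 2).Nonempty := by
      refine ⟨((3 / 2 : ℝ) ^ (1 / a₁) • EuclideanSpace.single ⟨0, by omega⟩ (1:ℝ), 0), ?_⟩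
      have : NN n a₁ a₂ ((3 / 2 : ℝ) ^ (1 / a₁) • EuclideanSpace.single ⟨0, by omega⟩ (1:ℝ), 0)
          = 3 / 2 := by
        simp only [NN]
        rw [norm_scale_rpow _ (by norm_num), one_div_mul_cancel ha₁0.ne', norm_zero,
          Real.zero_rpow ha₂0.ne']
        simp
      rw [mem_preimage, this]
      constructor <;> norm_num
    have := hop.measure_pos volume hne
    have h3 : volume (NN n a₁ a₂ ⁻¹' Ioo 1 2) ≤ volume (NN n a₁ a₂ ⁻¹' Icc 1 2) :=
      measure_mono (preimage_mono Ioo_subset_Icc_self)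
    exact absurd (this.trans_le (h3.trans e1)) (lt_irrefl _)
  · refine (e2.trans_lt (ENNReal.mul_lt_top ENNReal.coe_lt_top ?_)).ne
    have hsub : NN n a₁ a₂ ⁻¹' Icc 1 2 ⊆ closedBall 0 2 := by
      intro p hp
      have hp2 : NN n a₁ a₂ p ≤ 2 := hp.2
      unfold NN at hp2
      rw [mem_closedBall_zero_iff, Prod.norm_def]
      refine max_le ?_ ?_
      · apply le_two_of_rpow ha₁
        linarith [Real.rpow_nonneg (norm_nonneg p.2) a₂]
      · apply le_two_of_rpow ha₂
        linarith [Real.rpow_nonneg (norm_nonneg p.1) a₁]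
    exact (measure_mono hsub).trans_lt measure_closedBall_lt_top

lemma slicing_one (n : ℕ) (hn : 2 ≤ n) (a₁ a₂ : ℝ) (ha₁ : 1 ≤ a₁) (ha₂ : 1 ≤ a₂) :
    ∃ C : ℝ≥0, ∀ f g : Rn n → ℝ, Measurable f → Measurable g →
      ∀ (x : Rn n) (t₁ t₂ : ℝ),
        Jslice n a₁ a₂ f g t₁ t₂ x ≤ (C : ℝ≥0∞) * biAvgE n a₁ a₂ f g t₁ t₂ x ∧
          biAvgE n a₁ a₂ f g t₁ t₂ x ≤ (C : ℝ≥0∞) * Jslice n a₁ a₂ f g t₁ t₂ x := by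
  obtain ⟨C, h1, h2⟩ := S2_compare n hn a₁ a₂ ha₁ ha₂
  obtain ⟨K, hK0, hK⟩ := cone_slice n hn a₁ a₂ ha₁ ha₂
  obtain ⟨D, hD⟩ := sph_polar n hn
  obtain ⟨hM0, hMt⟩ := S2_mass n hn a₁ a₂ ha₁ ha₂
  obtain ⟨M, hM⟩ : ∃ M : ℝ≥0, μH[(2 * (n : ℝ) - 1)] (S2 n a₁ a₂) = M :=
    ⟨_, (ENNReal.coe_toNNReal hMt).symm⟩
  have hM0' : M ≠ 0 := by rintro rfl; exact hM0 (by simpa using hM)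
  refine ⟨max (D * (K⁻¹ * (C * M))) (M⁻¹ * (C * (K * D))), fun f g hf hg x t₁ t₂ => ?_⟩
  set F : Rn n × Rn n → ℝ≥0∞ := fun p =>
    ENNReal.ofReal (f (x - t₁ • p.1)) * ENNReal.ofReal (g (x - t₂ • p.2)) with hF
  have hFm : Measurable F := by fun_prop
  set ν := (μH[(2 * (n : ℝ) - 1)]).restrict (S2 n a₁ a₂) with hν
  set κ := Measure.map (PP n a₁ a₂) (volume.restrict (NN n a₁ a₂ ⁻¹' Icc 1 2)) with hκ
  have hbi : biAvgE n a₁ a₂ f g t₁ t₂ x = (M : ℝ≥0∞)⁻¹ * ∫⁻ p, F p ∂ν := by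
    unfold biAvgE μS2
    rw [lintegral_smul_measure, hM, smul_eq_mul]
  set I : ℝ≥0∞ := ∫⁻ y in ball (0 : Rn n) 1,
    ENNReal.ofReal ((omegaW a₁ a₂ y) ^ ((n : ℝ) - a₂)) *
        ∫⁻ θ : sphere (0 : Rn n) 1, F (y, omegaW a₁ a₂ y • (θ : Rn n))
          ∂(volume : Measure (Rn n)).toSphere with hI
  have hκI : ∫⁻ p, F p ∂κ = K * I := hK F hFm
  have hνκ : ∫⁻ p, F p ∂ν ≤ C * ∫⁻ p, F p ∂κ := by
    have := lintegral_mono' h2 (le_refl F)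
    rwa [lintegral_smul_measure, smul_eq_mul] at this
  have hκν : ∫⁻ p, F p ∂κ ≤ C * ∫⁻ p, F p ∂ν := by
    have := lintegral_mono' h1 (le_refl F)
    rwa [lintegral_smul_measure, smul_eq_mul] at this
  have hin : ∀ y : Rn n, ∫⁻ θ : sphere (0 : Rn n) 1, F (y, omegaW a₁ a₂ y • (θ : Rn n))
          ∂(volume : Measure (Rn n)).toSphere = ENNReal.ofReal (f (x - t₁ • y)) *
        ∫⁻ θ : sphere (0 : Rn n) 1, ENNReal.ofReal (g (x - (t₂ * omegaW a₁ a₂ y) • (θ : Rn n)))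
          ∂(volume : Measure (Rn n)).toSphere := fun y => by
    rw [← lintegral_const_mul _ (by fun_prop)]
    simp only [hF, smul_smul]
  have hJI : Jslice n a₁ a₂ f g t₁ t₂ x ≤ D * I := by
    rw [hI, ← lintegral_const_mul' _ _ ENNReal.coe_ne_top]
    refine lintegral_mono fun y => ?_
    have := (hD (fun θ => ENNReal.ofReal (g (x - (t₂ * omegaW a₁ a₂ y) • θ))) (by fun_prop)).1
    rw [hin y]
    unfold sphAvgE
    calc _ ≤ ENNReal.ofReal (f (x - t₁ • y)) * (D * _) *
          ENNReal.ofReal ((omegaW a₁ a₂ y) ^ ((n : ℝ) - a₂)) := by gcongr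
      _ = _ := by ring
  have hIJ : I ≤ D * Jslice n a₁ a₂ f g t₁ t₂ x := by
    rw [hI, Jslice, ← lintegral_const_mul' _ _ ENNReal.coe_ne_top]
    refine lintegral_mono fun y => ?_
    have := (hD (fun θ => ENNReal.ofReal (g (x - (t₂ * omegaW a₁ a₂ y) • θ))) (by fun_prop)).2
    simp only [hin y]
    unfold sphAvgE
    calc _ ≤ ENNReal.ofReal ((omegaW a₁ a₂ y) ^ ((n : ℝ) - a₂)) *
          (ENNReal.ofReal (f (x - t₁ • y)) * (D * _)) := by gcongr
      _ = _ := by ring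
  have hK0' : (K : ℝ≥0∞) ≠ 0 := by simpa using hK0
  have hM0'' : (M : ℝ≥0∞) ≠ 0 := by simpa using hM0'
  have hνM : ∫⁻ p, F p ∂ν = M * biAvgE n a₁ a₂ f g t₁ t₂ x := by
    rw [hbi, ← mul_assoc, ENNReal.mul_inv_cancel hM0'' ENNReal.coe_ne_top, one_mul]
  constructor
  · have hIle : I ≤ (K : ℝ≥0∞)⁻¹ * (C * ∫⁻ p, F p ∂ν) := by
      rw [← ENNReal.mul_le_iff_le_inv hK0' ENNReal.coe_ne_top, ← hκI]
      exact hκν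
    calc _ ≤ D * I := hJI
      _ ≤ D * ((K : ℝ≥0∞)⁻¹ * (C * ∫⁻ p, F p ∂ν)) := by gcongr
      _ = ((D * (K⁻¹ * (C * M)) : ℝ≥0) : ℝ≥0∞) * biAvgE n a₁ a₂ f g t₁ t₂ x := by
        rw [hνM]
        push_cast [ENNReal.coe_inv hK0]
        ring
      _ ≤ _ := by gcongr; exact le_max_left _ _
  · calc _ = (M : ℝ≥0∞)⁻¹ * ∫⁻ p, F p ∂ν := hbi
      _ ≤ (M : ℝ≥0∞)⁻¹ * (C * (K * (D * Jslice n a₁ a₂ f g t₁ t₂ x))) := by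
        gcongr
        refine hνκ.trans ?_
        rw [hκI]
        gcongr
      _ = ((M⁻¹ * (C * (K * D)) : ℝ≥0) : ℝ≥0∞) * Jslice n a₁ a₂ f g t₁ t₂ x := by
        push_cast [ENNReal.coe_inv hM0']
        ring
      _ ≤ _ := by gcongr; exact le_max_right _ _

/-- The coordinate swap on `ℝⁿ × ℝⁿ` as an isometry. -/
def swapIso (n : ℕ) : (Rn n × Rn n) ≃ᵢ (Rn n × Rn n) where
  toEquiv := Equiv.prodComm _ _
  isometry_toFun := fun p q => max_comm (edist p.2 q.2) (edist p.1 q.1)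

lemma biAvgE_swap (n : ℕ) (a₁ a₂ : ℝ) (f g : Rn n → ℝ) (t₁ t₂ : ℝ) (x : Rn n) :
    biAvgE n a₂ a₁ g f t₂ t₁ x = biAvgE n a₁ a₂ f g t₁ t₂ x := by
  have hpre : (swapIso n) ⁻¹' (S2 n a₂ a₁) = S2 n a₁ a₂ := by
    ext p
    change ‖p.2‖ ^ a₂ + ‖p.1‖ ^ a₁ = 1 ↔ ‖p.1‖ ^ a₁ + ‖p.2‖ ^ a₂ = 1
    rw [add_comm]
  have hmass : μH[(2 * (n : ℝ) - 1)] (S2 n a₂ a₁) = μH[(2 * (n : ℝ) - 1)] (S2 n a₁ a₂) := by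
    have h := (swapIso n).hausdorffMeasure_preimage (2 * (n : ℝ) - 1) (S2 n a₂ a₁)
    rw [hpre] at h
    exact h.symm
  have hme : MeasurableEmbedding (swapIso n) := (swapIso n).toHomeomorph.measurableEmbedding
  have hmp := ((swapIso n).measurePreserving_hausdorffMeasure (2 * (n : ℝ) - 1)).restrict_preimage_emb
    hme (S2 n a₂ a₁)
  rw [hpre] at hmp
  unfold biAvgE μS2
  rw [lintegral_smul_measure, lintegral_smul_measure, hmass,
    ← hmp.lintegral_comp_emb hme]
  congr 1
  refine lintegral_congr fun p => ?_
  exact mul_comm _ _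

/-- Slicing formula (the identities (2.4) and (2.5) of the paper): the bilinear
average over `S₂^𝐚` is comparable to the sliced integrals `J` and `J̃`. -/
theorem bilinear_average_slicing
    (n : ℕ) (hn : 2 ≤ n) (a₁ a₂ : ℝ) (ha₁ : 1 ≤ a₁) (ha₂ : 1 ≤ a₂) :
    ∃ c C : ℝ≥0, 0 < c ∧ ∀ f g : Rn n → ℝ,
      Measurable f → Measurable g → (∀ y, 0 ≤ f y) → (∀ y, 0 ≤ g y) →
      ∀ (x : Rn n) (t₁ t₂ : ℝ), 0 < t₁ → 0 < t₂ →
        ((c : ℝ≥0∞) * Jslice n a₁ a₂ f g t₁ t₂ x ≤ biAvgE n a₁ a₂ f g t₁ t₂ x ∧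
          biAvgE n a₁ a₂ f g t₁ t₂ x ≤ (C : ℝ≥0∞) * Jslice n a₁ a₂ f g t₁ t₂ x) ∧
        ((c : ℝ≥0∞) * Jslice n a₂ a₁ g f t₂ t₁ x ≤ biAvgE n a₁ a₂ f g t₁ t₂ x ∧
          biAvgE n a₁ a₂ f g t₁ t₂ x ≤ (C : ℝ≥0∞) * Jslice n a₂ a₁ g f t₂ t₁ x) := by
  obtain ⟨C₁, h₁⟩ := slicing_one n hn a₁ a₂ ha₁ ha₂
  obtain ⟨C₂, h₂⟩ := slicing_one n hn a₂ a₁ ha₂ ha₁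
  set C : ℝ≥0 := max (max C₁ C₂) 1 with hC
  have hC0 : C ≠ 0 := (lt_of_lt_of_le one_pos (le_max_right _ _)).ne'
  have hC1 : (C₁ : ℝ≥0∞) ≤ C := by
    exact_mod_cast (le_max_left C₁ C₂).trans (le_max_left _ _)
  have hC2 : (C₂ : ℝ≥0∞) ≤ C := by
    exact_mod_cast (le_max_right C₁ C₂).trans (le_max_left _ _)
  refine ⟨C⁻¹, C, by positivity, fun f g hf hg _ _ x t₁ t₂ _ _ => ?_⟩
  have e₁ := h₁ f g hf hg x t₁ t₂
  have e₂ := h₂ g f hg hf x t₂ t₁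
  rw [biAvgE_swap] at e₂
  rw [ENNReal.coe_inv hC0]
  have hC0' : (C : ℝ≥0∞) ≠ 0 := by simpa using hC0
  refine ⟨⟨?_, ?_⟩, ⟨?_, ?_⟩⟩
  · rw [ENNReal.inv_mul_le_iff hC0' ENNReal.coe_ne_top]
    exact e₁.1.trans (by gcongr)
  · exact e₁.2.trans (by gcongr)
  · rw [ENNReal.inv_mul_le_iff hC0' ENNReal.coe_ne_top]
    exact e₂.1.trans (by gcongr)
  · exact e₂.2.trans (by gcongr)
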